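/- Let p ∈ (1,∞), T ∈ (0,∞), u_0 ∈ L_p(ℝ^d), and f ∈ L_p((0,T); L_p(ℝ^d)). If u and v are both weak solutions of ∂_t w = a^{ij}(t) w_{x^i x^j} + f with w(0) = u_0, both are continuous from [0,T] into L_p(ℝ^d), and both satisfy ∫_0^T |a(t)| ‖w(t,·)‖_{L_p} dt < ∞, then u(t) = v(t) in L_p(ℝ^d) for every t ∈ [0,T]. -/

import Mathlib

open MeasureTheory Set ENNReal

noncomputable section

/-- The partial derivative `∂_{x^i} φ` of a function on `ℝ^d`. -/
def pd {d : ℕ} (i : Fin d) (φ : (Fin d → ℝ) → ℝ) : (Fin d → ℝ) → ℝ :=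
  fun x => fderiv ℝ φ x (Pi.single i 1)

/-- `|a(t)| = max_{i,j} |a^{ij}(t)|`. -/
def aMax {d : ℕ} (a : ℝ → Fin d → Fin d → ℝ) (t : ℝ) : ℝ :=
  ⨆ i, ⨆ j, |a t i j|

/-- `u` is a weak solution of `∂_t u = a^{ij}(t) u_{x^i x^j} + f`, `u(0) = u₀`, on `[0,T]`. -/
def IsWeakSolution {d : ℕ} (p : ℝ≥0∞) (T : ℝ) (a : ℝ → Fin d → Fin d → ℝ)
    (u0 : Lp ℝ p (volume : Measure (Fin d → ℝ)))
    (f u : ℝ → Lp ℝ p (volume : Measure (Fin d → ℝ))) : Prop :=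
  ∀ φ : (Fin d → ℝ) → ℝ, ContDiff ℝ (⊤ : ℕ∞) φ → HasCompactSupport φ →
    ∀ t ∈ Icc (0:ℝ) T,
      (∫ x, u t x * φ x) =
        (∫ x, u0 x * φ x) +
        ∫ s in Ioc (0:ℝ) t,
          ((∑ i, ∑ j, a s i j * ∫ x, u s x * pd i (pd j φ) x)
            + ∫ x, f s x * φ x)

/-!
The difference `w` of two solutions solves the homogeneous equation with zero initial value, so it
suffices to show that the mollifications `U_t = w(t) ⋆ ψ` vanish; they are smooth and bounded, with
`U_t - U_s = ∫_s^t a^{ij}(r) ∂_i ∂_j U_r dr`.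

Suppose first that `|a|` is integrable on `[s, t]`. Replacing `U_r` by `U_t` on the right costs at
most `C sup_r ‖w(r) - w(t)‖ ∫_s^t |a|`, and what remains is an implicit Euler step
`U_t - Q^{ij} ∂_i ∂_j U_t ≈ U_s` with the positive semidefinite matrix `Q = ∫_s^t a`. By the
maximum principle such a step does not increase the supremum. Summing the errors over a fine
partition and using the uniform continuity of `w` gives `sup U_t ≤ sup U_s`.

In general `|a|` may fail to be integrable, but only near the zeros of `w`: if `w(t) ≠ 0` and
`c < t` is the last zero of `w` before `t`, then the integrability of `|a| ‖w‖` makes `|a|`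
integrable on `[s, t]` for each `s > c`. Letting `s` decrease to `c` gives `sup U_t ≤ 0`, and the
same bound for `-ψ` shows `U_t = 0`.
-/

open scoped Convolution ContDiff

section LpPairing

variable {α : Type*} [MeasurableSpace α] {μ : Measure α} {p q : ℝ≥0∞} [p.HolderConjugate q]
  {φ : α → ℝ}

lemma integrable_Lp_mul (hφ : MemLp φ q μ) (w : Lp ℝ p μ) : Integrable (fun x => w x * φ x) μ :=
  (Lp.memLp w).integrable_mul hφ

lemma integral_Lp_sub_mul (hφ : MemLp φ q μ) (v w : Lp ℝ p μ) :
    ∫ x, (v - w) x * φ x ∂μ = ∫ x, v x * φ x ∂μ - ∫ x, w x * φ x ∂μ := by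
  rw [← integral_sub (integrable_Lp_mul hφ v) (integrable_Lp_mul hφ w)]
  refine integral_congr_ae ?_
  filter_upwards [Lp.coeFn_sub v w] with x hx
  rw [hx, Pi.sub_apply, sub_mul]

lemma abs_integral_Lp_mul_le (hφ : MemLp φ q μ) (w : Lp ℝ p μ) :
    |∫ x, w x * φ x ∂μ| ≤ lpNorm φ q μ * ‖w‖ := by
  let B := ContinuousLinearMap.mul ℝ ℝ
  have hB : B.holder 1 w hφ.toLp =ᵐ[μ] fun x => w x * φ x := by
    filter_upwards [hφ.coeFn_toLp, B.coeFn_holder (r := 1) w hφ.toLp] with x hx hBx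
    rw [hBx, hx, ContinuousLinearMap.mul_apply']
  calc |∫ x, w x * φ x ∂μ| ≤ ‖B.holder 1 w hφ.toLp‖ := by
        rw [← integral_congr_ae hB, ← L1.integral_eq_integral (B.holder 1 w hφ.toLp)]
        exact L1.norm_integral_le (B.holder 1 w hφ.toLp)
    _ ≤ ‖B‖ * ‖w‖ * ‖hφ.toLp‖ := B.norm_holder_apply_apply_le _ _
    _ = lpNorm φ q μ * ‖w‖ := by
        rw [ContinuousLinearMap.opNorm_mul, Lp.norm_toLp, toReal_eLpNorm hφ.1]
        ring

lemma continuous_integral_Lp_mul [Fact (1 ≤ p)] (hφ : MemLp φ q μ) :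
    Continuous fun w : Lp ℝ p μ => ∫ x, w x * φ x ∂μ := by
  let K : NNReal := ⟨lpNorm φ q μ, lpNorm_nonneg⟩
  refine (LipschitzWith.of_dist_le_mul (K := K) fun v w => ?_).continuous
  rw [Real.dist_eq, ← integral_Lp_sub_mul hφ, dist_eq_norm]
  exact abs_integral_Lp_mul_le hφ (v - w)

end LpPairing

section SecondOrder

lemma deriv_deriv_nonpos_of_isLocalMax {g : ℝ → ℝ} {x : ℝ} (hmax : IsLocalMax g x)
    (hg : ContinuousAt g x) : deriv (deriv g) x ≤ 0 := by
  by_contra! hpos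
  have hmin : IsLocalMin g x := isLocalMin_of_deriv_deriv_pos hpos hmax.deriv_eq_zero hg
  have hconst : g =ᶠ[nhds x] fun _ => g x := by
    filter_upwards [hmax, hmin] with y hle hge using le_antisymm hle hge
  have hzero : deriv (deriv g) x = 0 := by
    simpa using hconst.deriv.deriv_eq
  exact hpos.ne' hzero

lemma sum_mul_nonneg_of_posSemidef {n : Type*} [Fintype n] {A : n → n → ℝ}
    (hA : ∀ ξ : n → ℝ, 0 ≤ ∑ i, ∑ j, A i j * ξ i * ξ j) {H : Matrix n n ℝ} (hH : H.PosSemidef) :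
    0 ≤ ∑ i, ∑ j, A i j * H i j := by
  obtain ⟨m, v, rfl⟩ := Matrix.posSemidef_iff_eq_sum_vecMulVec.mp hH
  have hsum : ∑ i, ∑ j, A i j * (∑ k, Matrix.vecMulVec (v k) (star (v k))) i j =
      ∑ k, ∑ i, ∑ j, A i j * v k i * v k j := by
    simp only [Matrix.sum_apply, Matrix.vecMulVec_apply, star_trivial, Finset.mul_sum,
      mul_assoc]
    rw [Finset.sum_comm_cycle]
  rw [hsum]
  exact Finset.sum_nonneg fun k _ => hA (v k)

variable {d : ℕ} {U : (Fin d → ℝ) → ℝ}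

lemma contDiff_pd {m n : WithTop ℕ∞} (hU : ContDiff ℝ n U) (hmn : m + 1 ≤ n) (i : Fin d) :
    ContDiff ℝ m (pd i U) :=
  (hU.fderiv_right hmn).clm_apply contDiff_const

lemma pd_comm (hU : ContDiff ℝ 2 U) (i j : Fin d) (x : Fin d → ℝ) :
    pd i (pd j U) x = pd j (pd i U) x := by
  have hpd : ∀ k l, pd k (pd l U) x =
      fderiv ℝ (fderiv ℝ U) x (Pi.single k 1) (Pi.single l 1) := fun k l => by
    have hd : DifferentiableAt ℝ (fderiv ℝ U) x :=
      (hU.fderiv_right (m := 1) le_rfl).differentiable one_ne_zero x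
    change fderiv ℝ (fun y => fderiv ℝ U y (Pi.single l 1)) x (Pi.single k 1) = _
    rw [fderiv_clm_apply hd (differentiableAt_const _)]
    simp
  rw [hpd, hpd]
  exact (hU.contDiffAt.isSymmSndFDerivAt (by simp)).eq _ _

lemma hasDerivAt_comp_add_smul (hU : Differentiable ℝ U) (x ξ : Fin d → ℝ) (τ : ℝ) :
    HasDerivAt (fun τ : ℝ => U (x + τ • ξ)) (∑ i, ξ i * pd i U (x + τ • ξ)) τ := by
  have hline : HasDerivAt (fun τ : ℝ => x + τ • ξ) ξ τ := by
    simpa using ((hasDerivAt_id τ).smul_const ξ).const_add x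
  refine ((hU (x + τ • ξ)).hasFDerivAt.comp_hasDerivAt τ hline).congr_deriv ?_
  conv_lhs => enter [2]; rw [pi_eq_sum_univ' ξ]
  simp [pd]

lemma deriv_deriv_comp_add_smul (hU : ContDiff ℝ 2 U) (x ξ : Fin d → ℝ) :
    deriv (deriv fun τ : ℝ => U (x + τ • ξ)) 0 =
      ∑ i, ∑ j, ξ i * ξ j * pd i (pd j U) x := by
  have hpd (j : Fin d) : Differentiable ℝ (pd j U) :=
    (contDiff_pd (m := 1) hU le_rfl j).differentiable one_ne_zero
  have hfirst : deriv (fun τ : ℝ => U (x + τ • ξ)) = fun τ => ∑ j, ξ j * pd j U (x + τ • ξ) :=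
    funext fun τ => (hasDerivAt_comp_add_smul (hU.differentiable two_ne_zero) x ξ τ).deriv
  rw [hfirst, (HasDerivAt.fun_sum fun j _ =>
    (hasDerivAt_comp_add_smul (hpd j) x ξ 0).const_mul (ξ j)).deriv]
  simp only [Finset.mul_sum, zero_smul, add_zero]
  rw [Finset.sum_comm]
  exact Finset.sum_congr rfl fun i _ => Finset.sum_congr rfl fun j _ => by ring

end SecondOrder

section Diffusion

variable {d : ℕ} {A : Fin d → Fin d → ℝ} {U S : (Fin d → ℝ) → ℝ}

/-- The constant-coefficient operator `U ↦ A^{ij} U_{x^i x^j}`. -/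
def diffusion (A : Fin d → Fin d → ℝ) (U : (Fin d → ℝ) → ℝ) : (Fin d → ℝ) → ℝ :=
  fun x => ∑ i, ∑ j, A i j * pd i (pd j U) x

lemma diffusion_nonpos_of_isLocalMax (hA : ∀ ξ : Fin d → ℝ, 0 ≤ ∑ i, ∑ j, A i j * ξ i * ξ j)
    (hU : ContDiff ℝ 2 U) {x : Fin d → ℝ} (hmax : IsLocalMax U x) : diffusion A U x ≤ 0 := by
  have hline (ξ : Fin d → ℝ) : ∑ i, ∑ j, ξ i * ξ j * pd i (pd j U) x ≤ 0 := by
    have hcont : Continuous fun τ : ℝ => x + τ • ξ := by fun_prop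
    rw [← deriv_deriv_comp_add_smul hU]
    refine deriv_deriv_nonpos_of_isLocalMax ?_ (hU.continuous.comp hcont).continuousAt
    exact IsLocalMax.comp_continuous (f := U) (g := fun τ : ℝ => x + τ • ξ) (by simpa using hmax)
      hcont.continuousAt
  have hH : (Matrix.of fun i j => -pd i (pd j U) x).PosSemidef := by
    refine .of_dotProduct_mulVec_nonneg (Matrix.IsHermitian.ext fun i j => ?_) fun ξ => ?_
    · simp [pd_comm hU i j x]
    · simp only [dotProduct, Matrix.mulVec, Matrix.of_apply, Pi.star_apply, star_trivial,
        Finset.mul_sum]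
      rw [← neg_nonpos, ← Finset.sum_neg_distrib]
      simpa [← Finset.sum_neg_distrib, mul_assoc, mul_comm, mul_left_comm] using hline ξ
  simpa [diffusion] using sum_mul_nonneg_of_posSemidef hA hH

lemma pd_sub_const_mul (hU : Differentiable ℝ U) (hS : Differentiable ℝ S) (c : ℝ) (i : Fin d) :
    pd i (fun x => U x - c * S x) = fun x => pd i U x - c * pd i S x := by
  funext x
  simp only [pd]
  rw [fderiv_fun_sub (hU x) ((hS x).const_mul c), fderiv_const_mul (hS x)]
  simp

lemma diffusion_sub_const_mul (hU : ContDiff ℝ 2 U) (hS : ContDiff ℝ 2 S) (c : ℝ)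
    (x : Fin d → ℝ) :
    diffusion A (fun x => U x - c * S x) x = diffusion A U x - c * diffusion A S x := by
  have hpd {V : (Fin d → ℝ) → ℝ} (hV : ContDiff ℝ 2 V) (j : Fin d) : Differentiable ℝ (pd j V) :=
    (contDiff_pd (m := 1) hV le_rfl j).differentiable one_ne_zero
  simp only [diffusion, pd_sub_const_mul (hU.differentiable two_ne_zero)
    (hS.differentiable two_ne_zero), pd_sub_const_mul (hpd hU _) (hpd hS _), Finset.mul_sum,
    ← Finset.sum_sub_distrib]
  exact Finset.sum_congr rfl fun i _ => Finset.sum_congr rfl fun j _ => by ring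

lemma pd_sum_sq_sub (x₀ : Fin d → ℝ) (j : Fin d) :
    pd j (fun x => ∑ k, (x k - x₀ k) ^ 2) = fun x => 2 * (x j - x₀ j) := by
  funext x
  have h := HasFDerivAt.fun_sum (u := Finset.univ) fun k _ =>
    (((hasFDerivAt_apply k x).sub_const (x₀ k)).pow 2 : HasFDerivAt (𝕜 := ℝ) _ _ x)
  rw [pd, h.fderiv]
  simp [Pi.single_apply]

lemma diffusion_sum_sq_sub (A : Fin d → Fin d → ℝ) (x₀ x : Fin d → ℝ) :
    diffusion A (fun x => ∑ k, (x k - x₀ k) ^ 2) x = 2 * ∑ i, A i i := by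
  have hpd (i j : Fin d) : pd i (fun x => 2 * (x j - x₀ j)) x = if i = j then 2 else 0 := by
    have h : HasFDerivAt (𝕜 := ℝ) (fun x : Fin d → ℝ => 2 * (x j - x₀ j)) _ x :=
      ((hasFDerivAt_apply j x).sub_const (x₀ j)).const_mul 2
    rw [pd, h.fderiv]
    simp [Pi.single_apply, eq_comm]
  simp only [diffusion, pd_sum_sq_sub, hpd]
  simp [Finset.mul_sum, mul_comm]

lemma exists_forall_sub_const_mul_sum_sq_le (hU : Continuous U) (hbdd : BddAbove (range U))
    {δ : ℝ} (hδ : 0 < δ) (x₀ : Fin d → ℝ) :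
    ∃ x₁, ∀ x, U x - δ * ∑ k, (x k - x₀ k) ^ 2 ≤ U x₁ - δ * ∑ k, (x₁ k - x₀ k) ^ 2 := by
  obtain ⟨B, hB⟩ := hbdd
  refine (by fun_prop : Continuous fun x => U x - δ * ∑ k, (x k - x₀ k) ^ 2).exists_forall_ge' x₀ ?_
  have hfar : ∀ᶠ x : Fin d → ℝ in Filter.cocompact _, (B - U x₀) / δ ≤ dist x x₀ ^ 2 :=
    ((Filter.tendsto_pow_atTop two_ne_zero).comp
      (tendsto_dist_right_cocompact_atTop x₀)).eventually_ge_atTop _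
  filter_upwards [hfar] with x hx
  have hdist : dist x x₀ ^ 2 ≤ ∑ k, (x k - x₀ k) ^ 2 := by
    rw [← Real.le_sqrt dist_nonneg (by positivity), dist_pi_le_iff (Real.sqrt_nonneg _)]
    exact fun k => Real.abs_le_sqrt
      (Finset.single_le_sum (fun l _ => sq_nonneg (x l - x₀ l)) (Finset.mem_univ k))
  have hquad : B - U x₀ ≤ δ * ∑ k, (x k - x₀ k) ^ 2 := by
    rw [mul_comm]
    exact (div_le_iff₀ hδ).mp (hx.trans hdist)
  have hUx : U x ≤ B := hB (mem_range_self x)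
  simp only [sub_self, ne_eq, OfNat.ofNat_ne_zero, not_false_eq_true, zero_pow,
    Finset.sum_const_zero, mul_zero, sub_zero]
  linarith

/-- Dissipativity of `diffusion A` in the supremum norm, which drives the implicit Euler scheme. -/
lemma le_of_forall_sub_diffusion_le (hA : ∀ ξ : Fin d → ℝ, 0 ≤ ∑ i, ∑ j, A i j * ξ i * ξ j)
    (hU : ContDiff ℝ 2 U) (hbdd : BddAbove (range U)) {M : ℝ}
    (hM : ∀ x, U x - diffusion A U x ≤ M) (x₀ : Fin d → ℝ) : U x₀ ≤ M := by
  let S : (Fin d → ℝ) → ℝ := fun x => ∑ k, (x k - x₀ k) ^ 2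
  have hS : ContDiff ℝ 2 S := by fun_prop
  have hδ (δ : ℝ) (hδ : 0 < δ) : U x₀ ≤ M + δ * (2 * ∑ i, A i i) := by
    obtain ⟨x₁, hx₁⟩ := exists_forall_sub_const_mul_sum_sq_le hU.continuous hbdd hδ x₀
    have hmax := diffusion_nonpos_of_isLocalMax hA (hU.sub (contDiff_const.mul hS))
      (Filter.Eventually.of_forall hx₁ : IsLocalMax (fun x => U x - δ * S x) x₁)
    rw [diffusion_sub_const_mul hU hS, diffusion_sum_sq_sub] at hmax
    have hx₀ : U x₀ ≤ U x₁ - δ * S x₁ := by simpa using hx₁ x₀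
    have hS₁ : 0 ≤ δ * S x₁ := mul_nonneg hδ.le (Finset.sum_nonneg fun k _ => sq_nonneg _)
    linarith [hM x₁]
  have hlim : Filter.Tendsto (fun δ : ℝ => M + δ * (2 * ∑ i, A i i)) (nhdsWithin 0 (Ioi 0))
      (nhds M) := by
    have : Continuous fun δ : ℝ => M + δ * (2 * ∑ i, A i i) := by fun_prop
    simpa using (this.tendsto 0).mono_left nhdsWithin_le_nhds
  exact ge_of_tendsto hlim (by filter_upwards [self_mem_nhdsWithin] with δ h using hδ δ h)

end Diffusion

/-- Test functions: the elements of `C_c^∞`. -/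
structure IsTestFunction {E : Type*} [NormedAddCommGroup E] [NormedSpace ℝ E] (φ : E → ℝ) :
    Prop where
  contDiff : ContDiff ℝ (⊤ : ℕ∞) φ
  hasCompactSupport : HasCompactSupport φ

namespace IsTestFunction

section General

variable {E : Type*} [NormedAddCommGroup E] [NormedSpace ℝ E] {φ : E → ℝ}

lemma neg (hφ : IsTestFunction φ) : IsTestFunction (-φ) :=
  ⟨hφ.contDiff.neg, hφ.hasCompactSupport.neg⟩

lemma comp_const_sub (hφ : IsTestFunction φ) (x : E) : IsTestFunction fun y => φ (x - y) :=
  ⟨hφ.contDiff.comp (contDiff_const.sub contDiff_id),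
    hφ.hasCompactSupport.comp_homeomorph (Homeomorph.subLeft x)⟩

lemma memLp [MeasurableSpace E] [OpensMeasurableSpace E] [SecondCountableTopology E] {μ : Measure E}
    [IsFiniteMeasureOnCompacts μ] (hφ : IsTestFunction φ) (q : ℝ≥0∞) : MemLp φ q μ :=
  hφ.contDiff.continuous.memLp_of_hasCompactSupport hφ.hasCompactSupport

end General

variable {d : ℕ} {φ : (Fin d → ℝ) → ℝ}

lemma partialDeriv (hφ : IsTestFunction φ) (i : Fin d) : IsTestFunction (pd i φ) :=
  ⟨contDiff_pd hφ.contDiff (by simp) i, hφ.hasCompactSupport.fderiv_apply ℝ _⟩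

end IsTestFunction

lemma Lp_eq_of_forall_integral_mul_eq {E : Type*} [NormedAddCommGroup E] [NormedSpace ℝ E]
    [FiniteDimensional ℝ E] [MeasurableSpace E] [BorelSpace E] {μ : Measure E}
    [IsLocallyFiniteMeasure μ] {p : ℝ≥0∞} [Fact (1 ≤ p)] {v w : Lp ℝ p μ}
    (h : ∀ φ, IsTestFunction φ → ∫ x, v x * φ x ∂μ = ∫ x, w x * φ x ∂μ) : v = w := by
  refine Lp.ext (ae_eq_of_integral_contDiff_smul_eq ((Lp.memLp v).locallyIntegrable Fact.out)
    ((Lp.memLp w).locallyIntegrable Fact.out) fun φ hφ hφ_supp => ?_)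
  simpa only [smul_eq_mul, mul_comm] using h φ ⟨hφ, hφ_supp⟩

section Convolution

section Bound

variable {G : Type*} [AddCommGroup G] [MeasurableSpace G] [MeasurableAdd₂ G] [MeasurableNeg G]
  {μ : Measure G} [μ.IsAddLeftInvariant] [μ.IsNegInvariant] {p q : ℝ≥0∞} {ψ : G → ℝ}

lemma memLp_comp_const_sub (hψ : MemLp ψ q μ) (x : G) : MemLp (fun y => ψ (x - y)) q μ :=
  hψ.comp_measurePreserving (Measure.measurePreserving_sub_left μ x)

lemma lpNorm_comp_const_sub (hψ : MemLp ψ q μ) (x : G) :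
    lpNorm (fun y => ψ (x - y)) q μ = lpNorm ψ q μ := by
  rw [← toReal_eLpNorm hψ.1, ← toReal_eLpNorm (memLp_comp_const_sub hψ x).1,
    ← eLpNorm_comp_measurePreserving hψ.1 (Measure.measurePreserving_sub_left μ x)]
  rfl

lemma abs_convolution_Lp_le [p.HolderConjugate q] (hψ : MemLp ψ q μ) (w : Lp ℝ p μ) (x : G) :
    |(⇑w ⋆[ContinuousLinearMap.lsmul ℝ ℝ, μ] ψ) x| ≤ lpNorm ψ q μ * ‖w‖ := by
  rw [← lpNorm_comp_const_sub hψ x]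
  exact abs_integral_Lp_mul_le (memLp_comp_const_sub hψ x) w

lemma convolution_Lp_sub [p.HolderConjugate q] (hψ : MemLp ψ q μ) (v w : Lp ℝ p μ) (x : G) :
    (⇑(v - w) ⋆[ContinuousLinearMap.lsmul ℝ ℝ, μ] ψ) x =
      (⇑v ⋆[ContinuousLinearMap.lsmul ℝ ℝ, μ] ψ) x -
        (⇑w ⋆[ContinuousLinearMap.lsmul ℝ ℝ, μ] ψ) x :=
  integral_Lp_sub_mul (memLp_comp_const_sub hψ x) v w

end Bound

variable {d : ℕ} {p : ℝ≥0∞} [Fact (1 ≤ p)] {ψ : (Fin d → ℝ) → ℝ}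

lemma contDiff_convolution_Lp (w : Lp ℝ p (volume : Measure (Fin d → ℝ))) (hψ : IsTestFunction ψ) :
    ContDiff ℝ (⊤ : ℕ∞) (⇑w ⋆ ψ) :=
  hψ.hasCompactSupport.contDiff_convolution_right _ ((Lp.memLp w).locallyIntegrable Fact.out)
    hψ.contDiff

lemma bddAbove_range_convolution_Lp (w : Lp ℝ p (volume : Measure (Fin d → ℝ)))
    (hψ : IsTestFunction ψ) : BddAbove (range (⇑w ⋆ ψ)) :=
  ⟨_, forall_mem_range.2 fun x => (le_abs_self _).trans
    (abs_convolution_Lp_le (hψ.memLp p.conjExponent) w x)⟩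

lemma pd_convolution_Lp (w : Lp ℝ p (volume : Measure (Fin d → ℝ))) (hψ : IsTestFunction ψ)
    (i : Fin d) : pd i (⇑w ⋆ ψ) = ⇑w ⋆ pd i ψ := by
  funext x
  have hw : LocallyIntegrable w volume := (Lp.memLp w).locallyIntegrable Fact.out
  have hψ₁ : ContDiff ℝ 1 ψ := hψ.contDiff.of_le (by simp)
  rw [pd, (hψ.hasCompactSupport.hasFDerivAt_convolution_right _ hw hψ₁ x).fderiv]
  exact convolution_precompR_apply _ hw (hψ.hasCompactSupport.fderiv ℝ)
    (hψ₁.continuous_fderiv one_ne_zero) x _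

lemma diffusion_convolution_Lp (A : Fin d → Fin d → ℝ)
    (w : Lp ℝ p (volume : Measure (Fin d → ℝ))) (hψ : IsTestFunction ψ) (x : Fin d → ℝ) :
    diffusion A (⇑w ⋆ ψ) x = ∑ i, ∑ j, A i j * (⇑w ⋆ pd i (pd j ψ)) x := by
  simp only [diffusion, pd_convolution_Lp w hψ, pd_convolution_Lp w (hψ.partialDeriv _)]

lemma abs_diffusion_convolution_Lp_sub_le {q : ℝ≥0∞} [p.HolderConjugate q]
    {A : Fin d → Fin d → ℝ} {M : ℝ} (hA : ∀ i j, |A i j| ≤ M)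
    (v w : Lp ℝ p (volume : Measure (Fin d → ℝ))) (hψ : IsTestFunction ψ) (x : Fin d → ℝ) :
    |diffusion A (⇑v ⋆ ψ) x - diffusion A (⇑w ⋆ ψ) x| ≤
      M * ((∑ i, ∑ j, lpNorm (pd i (pd j ψ)) q volume) * ‖v - w‖) := by
  have hψ₂ (i j : Fin d) : MemLp (pd i (pd j ψ)) q volume :=
    ((hψ.partialDeriv j).partialDeriv i).memLp q
  simp only [diffusion_convolution_Lp _ _ hψ, ← Finset.sum_sub_distrib, ← mul_sub,
    ← convolution_Lp_sub (hψ₂ _ _), Finset.sum_mul, Finset.mul_sum]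
  refine (Finset.abs_sum_le_sum_abs _ _).trans (Finset.sum_le_sum fun i _ => ?_)
  refine (Finset.abs_sum_le_sum_abs _ _).trans (Finset.sum_le_sum fun j _ => ?_)
  rw [abs_mul]
  exact mul_le_mul (hA i j) (abs_convolution_Lp_le (hψ₂ i j) (v - w) x) (abs_nonneg _)
    ((abs_nonneg _).trans (hA i j))

lemma pd_comp_const_sub {φ : (Fin d → ℝ) → ℝ} (hφ : Differentiable ℝ φ) (x : Fin d → ℝ)
    (i : Fin d) : pd i (fun y => φ (x - y)) = fun y => -pd i φ (x - y) := by
  funext y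
  have h := (hφ (x - y)).hasFDerivAt.comp y ((hasFDerivAt_id y).const_sub x)
  rw [pd, HasFDerivAt.fderiv (f := fun y => φ (x - y)) h]
  simp [pd]

lemma pd_pd_comp_const_sub (hψ : IsTestFunction ψ) (x : Fin d → ℝ) (i j : Fin d) :
    pd i (pd j fun y => ψ (x - y)) = fun y => pd i (pd j ψ) (x - y) := by
  have hdiff {φ : (Fin d → ℝ) → ℝ} (hφ : IsTestFunction φ) : Differentiable ℝ φ :=
    hφ.contDiff.differentiable (by simp)
  rw [pd_comp_const_sub (hdiff hψ)]
  funext y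
  have hneg : pd i (fun y => -pd j ψ (x - y)) y = -pd i (fun y => pd j ψ (x - y)) y := by
    simp [pd, fderiv_fun_neg]
  rw [hneg, pd_comp_const_sub (hdiff (hψ.partialDeriv j)), neg_neg]

end Convolution

section RealVariable

lemma le_of_forall_increment_le {m A : ℝ → ℝ} {s t : ℝ} (hst : s ≤ t)
    (h : ∀ ε > 0, ∃ δ > 0, ∀ r r', s ≤ r → r ≤ r' → r' ≤ t → r' - r < δ →
      m r' - m r ≤ ε * (A r' - A r)) : m t ≤ m s := by
  have hε (ε : ℝ) (hε : 0 < ε) : m t ≤ m s + ε * (A t - A s) := by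
    obtain ⟨δ, hδ, hmesh⟩ := h ε hε
    obtain ⟨N, hN⟩ := exists_nat_gt ((t - s) / δ)
    have hN₀ : (0 : ℝ) < N := (div_nonneg (sub_nonneg.2 hst) hδ.le).trans_lt hN
    let r : ℕ → ℝ := fun k => s + k * ((t - s) / N)
    have hr_succ (k : ℕ) : r (k + 1) - r k = (t - s) / N := by
      simp only [r, Nat.cast_succ]; ring
    have hr_mono : Monotone r := monotone_nat_of_le_succ fun k => by
      linarith [hr_succ k, div_nonneg (sub_nonneg.2 hst) hN₀.le]
    have hr_zero : r 0 = s := by simp [r]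
    have hr_last : r N = t := by simp only [r]; field_simp; ring
    have hstep (k : ℕ) (hk : k ∈ Finset.range N) :
        m (r (k + 1)) - m (r k) ≤ ε * A (r (k + 1)) - ε * A (r k) := by
      rw [← mul_sub]
      refine hmesh _ _ (hr_zero ▸ hr_mono k.zero_le) (hr_mono k.le_succ)
        (hr_last ▸ hr_mono (Finset.mem_range.1 hk)) ?_
      rw [hr_succ, div_lt_iff₀ hN₀, mul_comm]
      exact (div_lt_iff₀ hδ).1 hN
    have hsum := Finset.sum_le_sum hstep
    rw [Finset.sum_range_sub (fun k => m (r k)), Finset.sum_range_sub (fun k => ε * A (r k)),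
      hr_zero, hr_last] at hsum
    linarith
  have hlim : Filter.Tendsto (fun ε : ℝ => m s + ε * (A t - A s)) (nhdsWithin 0 (Ioi 0))
      (nhds (m s)) := by
    have : Continuous fun ε : ℝ => m s + ε * (A t - A s) := by fun_prop
    simpa using (this.tendsto 0).mono_left nhdsWithin_le_nhds
  exact ge_of_tendsto hlim (by filter_upwards [self_mem_nhdsWithin] with ε h using hε ε h)

lemma exists_last_zero {E : Type*} [TopologicalSpace E] [T1Space E] [Zero E] {w : ℝ → E} {s t : ℝ}
    (hst : s ≤ t) (hw : ContinuousOn w (Icc s t)) (hs : w s = 0) (ht : w t ≠ 0) :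
    ∃ c ∈ Ico s t, w c = 0 ∧ ∀ r ∈ Ioc c t, w r ≠ 0 := by
  have hclosed : IsClosed (Icc s t ∩ w ⁻¹' {0}) :=
    hw.preimage_isClosed_of_isClosed isClosed_Icc isClosed_singleton
  obtain ⟨c, ⟨hc, hwc⟩, hmax⟩ := (isCompact_Icc.of_isClosed_subset hclosed
    inter_subset_left).exists_isGreatest ⟨s, left_mem_Icc.2 hst, hs⟩
  refine ⟨c, ⟨hc.1, hc.2.lt_of_ne fun h => ht (h ▸ hwc)⟩, hwc, fun r hr hwr => ?_⟩
  exact hr.1.not_ge (hmax ⟨⟨hc.1.trans hr.1.le, hr.2⟩, hwr⟩)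

lemma integrableOn_of_mul_norm {E : Type*} [NormedAddCommGroup E] {g : ℝ → ℝ} {w : ℝ → E}
    {s t : ℝ} (hw : ContinuousOn w (Icc s t)) (hne : ∀ r ∈ Icc s t, w r ≠ 0)
    (hgw : IntegrableOn (fun r => g r * ‖w r‖) (Icc s t)) : IntegrableOn g (Icc s t) := by
  have hinv : ContinuousOn (fun r => ‖w r‖⁻¹) (Icc s t) :=
    hw.norm.inv₀ fun r hr => norm_ne_zero_iff.2 (hne r hr)
  refine (hgw.mul_continuousOn hinv isCompact_Icc).congr_fun (fun r hr => ?_) measurableSet_Icc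
  exact mul_inv_cancel_right₀ (norm_ne_zero_iff.2 (hne r hr)) _

end RealVariable

section Coefficients

variable {d : ℕ} {a : ℝ → Fin d → Fin d → ℝ}

lemma abs_le_aMax (a : ℝ → Fin d → Fin d → ℝ) (t : ℝ) (i j : Fin d) : |a t i j| ≤ aMax a t :=
  (le_ciSup (f := fun j => |a t i j|) (finite_range _).bddAbove j).trans
    (le_ciSup (f := fun i => ⨆ j, |a t i j|) (finite_range _).bddAbove i)

lemma aMax_nonneg (a : ℝ → Fin d → Fin d → ℝ) (t : ℝ) : 0 ≤ aMax a t :=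
  Real.iSup_nonneg fun _ => Real.iSup_nonneg fun _ => abs_nonneg _

lemma integrableOn_coeff (ha : ∀ i j, Measurable fun t => a t i j) {s : Set ℝ}
    (hint : IntegrableOn (aMax a) s) (i j : Fin d) : IntegrableOn (fun t => a t i j) s :=
  hint.mono' (ha i j).aestronglyMeasurable (.of_forall fun t => abs_le_aMax a t i j)

variable {s t : ℝ}

lemma intervalIntegrable_sum_sum_coeff_mul
    (ha : ∀ i j, IntervalIntegrable (fun r => a r i j) volume s t) (c : Fin d → Fin d → ℝ) :
    IntervalIntegrable (fun r => ∑ i, ∑ j, a r i j * c i j) volume s t := by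
  simpa only [Finset.sum_fn] using IntervalIntegrable.sum Finset.univ fun i _ =>
    IntervalIntegrable.sum Finset.univ fun j _ => (ha i j).mul_const (c i j)

lemma integral_sum_sum_coeff_mul (ha : ∀ i j, IntervalIntegrable (fun r => a r i j) volume s t)
    (c : Fin d → Fin d → ℝ) :
    ∫ r in s..t, ∑ i, ∑ j, a r i j * c i j = ∑ i, ∑ j, (∫ r in s..t, a r i j) * c i j := by
  have hac (i j : Fin d) : IntervalIntegrable (fun r => a r i j * c i j) volume s t :=
    (ha i j).mul_const _
  rw [intervalIntegral.integral_finsetSum fun i _ => by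
    simpa only [Finset.sum_fn] using IntervalIntegrable.sum Finset.univ fun j _ => hac i j]
  refine Finset.sum_congr rfl fun i _ => ?_
  rw [intervalIntegral.integral_finsetSum fun j _ => hac i j]
  simp only [intervalIntegral.integral_mul_const]

lemma quadraticForm_integral_nonneg (hst : s ≤ t)
    (ha : ∀ i j, IntervalIntegrable (fun r => a r i j) volume s t)
    (hpos : ∀ r ∈ Ioc s t, ∀ ξ : Fin d → ℝ, 0 ≤ ∑ i, ∑ j, a r i j * ξ i * ξ j) (ξ : Fin d → ℝ) :
    0 ≤ ∑ i, ∑ j, (∫ r in s..t, a r i j) * ξ i * ξ j := by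
  simp only [mul_assoc] at hpos ⊢
  rw [← integral_sum_sum_coeff_mul ha, intervalIntegral.integral_of_le hst]
  exact setIntegral_nonneg measurableSet_Ioc fun r hr => hpos r hr ξ

end Coefficients

section WeakSolution

variable {d : ℕ} {p : ℝ≥0∞} [Fact (1 ≤ p)] {T : ℝ} {a : ℝ → Fin d → Fin d → ℝ}
  {u0 v0 : Lp ℝ p (volume : Measure (Fin d → ℝ))}
  {f g u v w : ℝ → Lp ℝ p (volume : Measure (Fin d → ℝ))}

/-- The uniqueness class: continuous `L_p`-valued functions on `[0, T]` with
`∫_0^T |a(t)| ‖u(t)‖ dt < ∞`. -/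
structure InUniquenessClass (T : ℝ) (a : ℝ → Fin d → Fin d → ℝ)
    (u : ℝ → Lp ℝ p (volume : Measure (Fin d → ℝ))) : Prop where
  continuousOn : ContinuousOn u (Icc 0 T)
  integrableOn : IntegrableOn (fun t => aMax a t * ‖u t‖) (Ioc 0 T)

namespace InUniquenessClass

lemma sub (ha : ∀ i j, Measurable fun t => a t i j) (hu : InUniquenessClass T a u)
    (hv : InUniquenessClass T a v) : InUniquenessClass T a (u - v) where
  continuousOn := hu.continuousOn.sub hv.continuousOn
  integrableOn := by
    have hcont := (hu.continuousOn.sub hv.continuousOn).mono Ioc_subset_Icc_self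
    have haMax : Measurable (aMax a) := .iSup fun i => .iSup fun j => (ha i j).abs
    refine (hu.integrableOn.add hv.integrableOn).mono' (haMax.aestronglyMeasurable.mul
      (hcont.norm.aestronglyMeasurable measurableSet_Ioc)) (.of_forall fun t => ?_)
    rw [Real.norm_of_nonneg (mul_nonneg (aMax_nonneg a t) (norm_nonneg _))]
    exact (mul_le_mul_of_nonneg_left (norm_sub_le _ _) (aMax_nonneg a t)).trans_eq (mul_add _ _ _)

lemma integrableOn_coeff_mul_integral (ha : ∀ i j, Measurable fun t => a t i j)
    (hu : InUniquenessClass T a u) {q : ℝ≥0∞} [p.HolderConjugate q] {φ : (Fin d → ℝ) → ℝ}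
    (hφ : MemLp φ q volume) (i j : Fin d) :
    IntegrableOn (fun t => a t i j * ∫ x, u t x * φ x) (Ioc 0 T) := by
  have hmeas := (((continuous_integral_Lp_mul hφ).comp_continuousOn hu.continuousOn).mono
    Ioc_subset_Icc_self).aestronglyMeasurable measurableSet_Ioc (μ := volume)
  refine (hu.integrableOn.const_mul (lpNorm φ q volume)).mono'
    ((ha i j).aestronglyMeasurable.mul hmeas) (.of_forall fun t => ?_)
  rw [norm_mul, Real.norm_eq_abs, Real.norm_eq_abs, mul_left_comm]
  exact mul_le_mul (abs_le_aMax a t i j) (abs_integral_Lp_mul_le hφ _) (abs_nonneg _)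
    (aMax_nonneg a t)

lemma integrableOn_sum_sum_coeff_mul_integral (ha : ∀ i j, Measurable fun t => a t i j)
    (hu : InUniquenessClass T a u) {φ : (Fin d → ℝ) → ℝ} (hφ : IsTestFunction φ) :
    IntegrableOn (fun t => ∑ i, ∑ j, a t i j * ∫ x, u t x * pd i (pd j φ) x) (Ioc 0 T) :=
  integrable_finsetSum _ fun i _ => integrable_finsetSum _ fun j _ =>
    hu.integrableOn_coeff_mul_integral ha
      (((hφ.partialDeriv j).partialDeriv i).memLp p.conjExponent) i j

lemma intervalIntegrable_diffusion_convolution (ha : ∀ i j, Measurable fun t => a t i j)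
    (hu : InUniquenessClass T a u) {ψ : (Fin d → ℝ) → ℝ} (hψ : IsTestFunction ψ) {s t : ℝ}
    (hs : 0 ≤ s) (hst : s ≤ t) (ht : t ≤ T) (x : Fin d → ℝ) :
    IntervalIntegrable (fun r => diffusion (a r) (⇑(u r) ⋆ ψ) x) volume s t := by
  rw [intervalIntegrable_iff_integrableOn_Ioc_of_le hst]
  simp only [diffusion_convolution_Lp _ _ hψ, convolution_lsmul, smul_eq_mul]
  simpa only [pd_pd_comp_const_sub hψ] using
    (hu.integrableOn_sum_sum_coeff_mul_integral ha (hψ.comp_const_sub x)).mono_set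
      (Ioc_subset_Ioc hs ht)

end InUniquenessClass

lemma integrableOn_integral_Lp_mul {s : Set ℝ} {q : ℝ≥0∞} [p.HolderConjugate q]
    (hf : IntegrableOn f s) {φ : (Fin d → ℝ) → ℝ} (hφ : MemLp φ q volume) :
    IntegrableOn (fun t => ∫ x, f t x * φ x) s :=
  (hf.norm.const_mul (lpNorm φ q volume)).mono'
    ((continuous_integral_Lp_mul hφ).comp_aestronglyMeasurable hf.aestronglyMeasurable)
    (.of_forall fun t => abs_integral_Lp_mul_le hφ (f t))

lemma abs_integral_diffusion_convolution_sub_le {ψ : (Fin d → ℝ) → ℝ} (hψ : IsTestFunction ψ)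
    {q : ℝ≥0∞} [p.HolderConjugate q] {s t η : ℝ} (hst : s ≤ t)
    (hint : IntegrableOn (aMax a) (Ioc s t)) {z : Lp ℝ p (volume : Measure (Fin d → ℝ))}
    (hη : ∀ r ∈ Ioc s t, ‖w r - z‖ ≤ η) (x : Fin d → ℝ) :
    |∫ r in s..t, (diffusion (a r) (⇑(w r) ⋆ ψ) x - diffusion (a r) (⇑z ⋆ ψ) x)| ≤
      (∑ i, ∑ j, lpNorm (pd i (pd j ψ)) q volume) * η * ∫ r in s..t, aMax a r := by
  have hK : 0 ≤ ∑ i, ∑ j, lpNorm (pd i (pd j ψ)) q volume :=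
    Finset.sum_nonneg fun i _ => Finset.sum_nonneg fun j _ => lpNorm_nonneg
  have haMax : IntervalIntegrable (aMax a) volume s t :=
    (intervalIntegrable_iff_integrableOn_Ioc_of_le hst).2 hint
  rw [← intervalIntegral.integral_const_mul, ← Real.norm_eq_abs]
  refine intervalIntegral.norm_integral_le_of_norm_le hst (.of_forall fun r hr => ?_)
    (haMax.const_mul _)
  refine (abs_diffusion_convolution_Lp_sub_le (q := q) (abs_le_aMax a r) _ _ hψ x).trans ?_
  rw [mul_comm (aMax a r)]
  gcongr
  exacts [aMax_nonneg a r, hη r hr]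

namespace IsWeakSolution

lemma sub (ha : ∀ i j, Measurable fun t => a t i j) (hf : IntegrableOn f (Ioc 0 T))
    (hg : IntegrableOn g (Ioc 0 T)) (hu : IsWeakSolution p T a u0 f u)
    (hv : IsWeakSolution p T a v0 g v) (hu' : InUniquenessClass T a u)
    (hv' : InUniquenessClass T a v) : IsWeakSolution p T a (u0 - v0) (f - g) (u - v) := by
  intro φ hφ_smooth hφ_supp t ht
  have hφ : IsTestFunction φ := ⟨hφ_smooth, hφ_supp⟩
  have hpair := integral_Lp_sub_mul (p := p) (hφ.memLp (μ := volume) p.conjExponent)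
  have hpair₂ (i j : Fin d) := integral_Lp_sub_mul (p := p)
    (((hφ.partialDeriv j).partialDeriv i).memLp (μ := volume) p.conjExponent)
  have hrhs {u f : ℝ → Lp ℝ p (volume : Measure (Fin d → ℝ))} (hu : InUniquenessClass T a u)
      (hf : IntegrableOn f (Ioc 0 T)) :
      IntegrableOn (fun s => (∑ i, ∑ j, a s i j * ∫ x, u s x * pd i (pd j φ) x) +
        ∫ x, f s x * φ x) (Ioc 0 t) :=
    ((hu.integrableOn_sum_sum_coeff_mul_integral ha hφ).add
      (integrableOn_integral_Lp_mul hf (hφ.memLp p.conjExponent))).mono_set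
        (Ioc_subset_Ioc_right ht.2)
  simp only [Pi.sub_apply, hpair, hpair₂, mul_sub, Finset.sum_sub_distrib]
  rw [hu φ hφ_smooth hφ_supp t ht, hv φ hφ_smooth hφ_supp t ht, add_sub_add_comm,
    ← integral_sub (hrhs hu' hf) (hrhs hv' hg)]
  simp only [add_sub_add_comm]

lemma apply_zero (hT : 0 ≤ T) (hu : IsWeakSolution p T a u0 f u) : u 0 = u0 :=
  Lp_eq_of_forall_integral_mul_eq fun φ hφ => by
    simpa using hu φ hφ.contDiff hφ.hasCompactSupport 0 ⟨le_rfl, hT⟩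

lemma integral_mul_sub_eq (ha : ∀ i j, Measurable fun t => a t i j)
    (hw : IsWeakSolution p T a u0 0 w) (hw' : InUniquenessClass T a w) {φ : (Fin d → ℝ) → ℝ}
    (hφ : IsTestFunction φ) {s t : ℝ} (hs : 0 ≤ s) (hst : s ≤ t) (ht : t ≤ T) :
    (∫ x, w t x * φ x) - ∫ x, w s x * φ x =
      ∫ r in s..t, ∑ i, ∑ j, a r i j * ∫ x, w r x * pd i (pd j φ) x := by
  have hint {r : ℝ} (hr : r ∈ Icc 0 T) : IntervalIntegrable
      (fun r => ∑ i, ∑ j, a r i j * ∫ x, w r x * pd i (pd j φ) x) volume 0 r :=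
    (intervalIntegrable_iff_integrableOn_Ioc_of_le hr.1).2
      ((hw'.integrableOn_sum_sum_coeff_mul_integral ha hφ).mono_set (Ioc_subset_Ioc_right hr.2))
  have hrep {r : ℝ} (hr : r ∈ Icc 0 T) : ∫ x, w r x * φ x = (∫ x, u0 x * φ x) +
      ∫ r in 0..r, ∑ i, ∑ j, a r i j * ∫ x, w r x * pd i (pd j φ) x := by
    have hzero : ∫ x, (0 : Lp ℝ p (volume : Measure (Fin d → ℝ))) x * φ x = 0 := by simp
    rw [hw φ hφ.contDiff hφ.hasCompactSupport r hr, intervalIntegral.integral_of_le hr.1]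
    simp only [Pi.zero_apply, hzero, add_zero]
  have hs' : s ∈ Icc 0 T := ⟨hs, hst.trans ht⟩
  have ht' : t ∈ Icc 0 T := ⟨hs.trans hst, ht⟩
  rw [hrep ht', hrep hs', add_sub_add_left_eq_sub,
    intervalIntegral.integral_interval_sub_left (hint ht') (hint hs')]

lemma convolution_sub_eq (ha : ∀ i j, Measurable fun t => a t i j)
    (hw : IsWeakSolution p T a u0 0 w) (hw' : InUniquenessClass T a w) {ψ : (Fin d → ℝ) → ℝ}
    (hψ : IsTestFunction ψ) {s t : ℝ} (hs : 0 ≤ s) (hst : s ≤ t) (ht : t ≤ T) (x : Fin d → ℝ) :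
    (⇑(w t) ⋆ ψ) x - (⇑(w s) ⋆ ψ) x = ∫ r in s..t, diffusion (a r) (⇑(w r) ⋆ ψ) x := by
  simp only [diffusion_convolution_Lp _ _ hψ, convolution_lsmul, smul_eq_mul]
  simpa only [pd_pd_comp_const_sub hψ] using
    hw.integral_mul_sub_eq ha hw' (hψ.comp_const_sub x) hs hst ht

lemma convolution_le_iSup_add (ha : ∀ i j, Measurable fun t => a t i j)
    (hpos : ∀ t ∈ Ioc 0 T, ∀ ξ : Fin d → ℝ, 0 ≤ ∑ i, ∑ j, a t i j * ξ i * ξ j)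
    (hw : IsWeakSolution p T a u0 0 w) (hw' : InUniquenessClass T a w) {ψ : (Fin d → ℝ) → ℝ}
    (hψ : IsTestFunction ψ) {q : ℝ≥0∞} [p.HolderConjugate q] {s t η : ℝ} (hs : 0 ≤ s)
    (hst : s ≤ t) (ht : t ≤ T) (hint : IntegrableOn (aMax a) (Ioc s t))
    (hη : ∀ r ∈ Ioc s t, ‖w r - w t‖ ≤ η) (x : Fin d → ℝ) :
    (⇑(w t) ⋆ ψ) x ≤ (⨆ y, (⇑(w s) ⋆ ψ) y) +
      (∑ i, ∑ j, lpNorm (pd i (pd j ψ)) q volume) * η * ∫ r in s..t, aMax a r := by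
  have hcoeff (i j : Fin d) : IntervalIntegrable (fun r => a r i j) volume s t :=
    (intervalIntegrable_iff_integrableOn_Ioc_of_le hst).2 (integrableOn_coeff ha hint i j)
  refine le_of_forall_sub_diffusion_le (A := fun i j => ∫ r in s..t, a r i j)
    (quadraticForm_integral_nonneg hst hcoeff fun r hr => hpos r ⟨hs.trans_lt hr.1, hr.2.trans ht⟩)
    (contDiff_infty.1 (contDiff_convolution_Lp (w t) hψ) 2)
    (bddAbove_range_convolution_Lp (w t) hψ) (fun y => ?_) x
  have hfrozen : ∫ r in s..t, diffusion (a r) (⇑(w t) ⋆ ψ) y =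
      diffusion (fun i j => ∫ r in s..t, a r i j) (⇑(w t) ⋆ ψ) y :=
    integral_sum_sum_coeff_mul hcoeff _
  have hfrozen_int : IntervalIntegrable (fun r => diffusion (a r) (⇑(w t) ⋆ ψ) y) volume s t :=
    intervalIntegrable_sum_sum_coeff_mul hcoeff _
  have herror := (le_abs_self _).trans
    (abs_integral_diffusion_convolution_sub_le hψ (q := q) hst hint hη y)
  rw [intervalIntegral.integral_sub
    (hw'.intervalIntegrable_diffusion_convolution ha hψ hs hst ht y) hfrozen_int, hfrozen,
    ← hw.convolution_sub_eq ha hw' hψ hs hst ht y] at herror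
  linarith [le_ciSup (bddAbove_range_convolution_Lp (w s) hψ) y]

lemma iSup_convolution_le (ha : ∀ i j, Measurable fun t => a t i j)
    (hpos : ∀ t ∈ Ioc 0 T, ∀ ξ : Fin d → ℝ, 0 ≤ ∑ i, ∑ j, a t i j * ξ i * ξ j)
    (hw : IsWeakSolution p T a u0 0 w) (hw' : InUniquenessClass T a w) {ψ : (Fin d → ℝ) → ℝ}
    (hψ : IsTestFunction ψ) {s t : ℝ} (hs : 0 ≤ s) (hst : s ≤ t) (ht : t ≤ T)
    (hint : IntegrableOn (aMax a) (Icc s t)) :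
    ⨆ x, (⇑(w t) ⋆ ψ) x ≤ ⨆ x, (⇑(w s) ⋆ ψ) x := by
  set K : ℝ := ∑ i, ∑ j, lpNorm (pd i (pd j ψ)) p.conjExponent volume
  have hK₀ : 0 ≤ K := Finset.sum_nonneg fun i _ => Finset.sum_nonneg fun j _ => lpNorm_nonneg
  have hint' {r r' : ℝ} (hr : s ≤ r) (hr' : r' ≤ t) : IntegrableOn (aMax a) (Ioc r r') :=
    hint.mono_set (Ioc_subset_Icc_self.trans (Icc_subset_Icc hr hr'))
  have hunif := isCompact_Icc.uniformContinuousOn_of_continuous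
    (hw'.continuousOn.mono (Icc_subset_Icc hs ht))
  refine le_of_forall_increment_le (m := fun r => ⨆ x, (⇑(w r) ⋆ ψ) x)
    (A := fun r => ∫ σ in s..r, aMax a σ) hst fun ε hε => ?_
  obtain ⟨δ, hδ, hclose⟩ := Metric.uniformContinuousOn_iff_le.1 hunif (ε / (K + 1)) (by positivity)
  refine ⟨δ, hδ, fun r r' hr hrr' hr' hmesh => ?_⟩
  have hη (σ : ℝ) (hσ : σ ∈ Ioc r r') : ‖w σ - w r'‖ ≤ ε / (K + 1) := by
    rw [← dist_eq_norm]
    refine hclose σ ⟨hr.trans hσ.1.le, hσ.2.trans hr'⟩ r' ⟨hr.trans hrr', hr'⟩ ?_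
    rw [dist_comm, Real.dist_eq, abs_of_nonneg (sub_nonneg.2 hσ.2)]
    linarith [hσ.1]
  have hstep := ciSup_le (hw.convolution_le_iSup_add ha hpos hw' hψ (q := p.conjExponent)
    (hs.trans hr) hrr' (hr'.trans ht) (hint' hr hr') hη)
  have hKε : K * (ε / (K + 1)) ≤ ε := by
    rw [← mul_div_assoc, div_le_iff₀ (by positivity)]
    linarith
  have hincr : 0 ≤ ∫ σ in r..r', aMax a σ :=
    intervalIntegral.integral_nonneg hrr' fun σ _ => aMax_nonneg a σ
  rw [intervalIntegral.integral_interval_sub_left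
    ((intervalIntegrable_iff_integrableOn_Ioc_of_le (hr.trans hrr')).2 (hint' le_rfl hr'))
    ((intervalIntegrable_iff_integrableOn_Ioc_of_le hr).2 (hint' le_rfl (hrr'.trans hr')))]
  linarith [mul_le_mul_of_nonneg_right hKε hincr]

lemma convolution_nonpos (ha : ∀ i j, Measurable fun t => a t i j)
    (hpos : ∀ t ∈ Ioc 0 T, ∀ ξ : Fin d → ℝ, 0 ≤ ∑ i, ∑ j, a t i j * ξ i * ξ j)
    (hw : IsWeakSolution p T a 0 0 w) (hw' : InUniquenessClass T a w) {ψ : (Fin d → ℝ) → ℝ}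
    (hψ : IsTestFunction ψ) {t : ℝ} (ht : t ∈ Icc 0 T) (x : Fin d → ℝ) :
    (⇑(w t) ⋆ ψ) x ≤ 0 := by
  by_cases hwt : w t = 0
  · have hbound := abs_convolution_Lp_le (hψ.memLp p.conjExponent) (w t) x
    rw [hwt, norm_zero, mul_zero] at hbound
    exact hwt ▸ (le_abs_self _).trans hbound
  obtain ⟨c, hc, hwc, hne⟩ := exists_last_zero ht.1
    (hw'.continuousOn.mono (Icc_subset_Icc_right ht.2)) (hw.apply_zero (ht.1.trans ht.2)) hwt
  have hbound {s : ℝ} (hs : s ∈ Ioc c t) :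
      (⇑(w t) ⋆ ψ) x ≤ lpNorm ψ p.conjExponent volume * ‖w s‖ := by
    have hs₀ : 0 < s := hc.1.trans_lt hs.1
    have hint : IntegrableOn (aMax a) (Icc s t) := integrableOn_of_mul_norm
      (hw'.continuousOn.mono (Icc_subset_Icc hs₀.le ht.2))
      (fun r hr => hne r ⟨hs.1.trans_le hr.1, hr.2⟩)
      (hw'.integrableOn.mono_set fun r hr => ⟨hs₀.trans_le hr.1, hr.2.trans ht.2⟩)
    calc (⇑(w t) ⋆ ψ) x ≤ ⨆ y, (⇑(w t) ⋆ ψ) y :=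
          le_ciSup (bddAbove_range_convolution_Lp (w t) hψ) x
      _ ≤ ⨆ y, (⇑(w s) ⋆ ψ) y := hw.iSup_convolution_le ha hpos hw' hψ hs₀.le hs.2 ht.2 hint
      _ ≤ lpNorm ψ p.conjExponent volume * ‖w s‖ := ciSup_le fun y =>
          (le_abs_self _).trans (abs_convolution_Lp_le (hψ.memLp p.conjExponent) (w s) y)
  have hlim : Filter.Tendsto (fun s => lpNorm ψ p.conjExponent volume * ‖w s‖)
      (nhdsWithin c (Ioc c t)) (nhds 0) := by
    have hcont := (hw'.continuousOn c ⟨hc.1, hc.2.le.trans ht.2⟩).mono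
      (show Ioc c t ⊆ Icc 0 T from fun s hs => ⟨hc.1.trans hs.1.le, hs.2.trans ht.2⟩)
    simpa [hwc] using (hcont.norm.const_mul (lpNorm ψ p.conjExponent volume)).tendsto
  have : (nhdsWithin c (Ioc c t)).NeBot := by
    rw [nhdsWithin_Ioc_eq_nhdsGT hc.2]; infer_instance
  exact ge_of_tendsto hlim (by filter_upwards [self_mem_nhdsWithin] with s hs using hbound hs)

lemma eq_zero (ha : ∀ i j, Measurable fun t => a t i j)
    (hpos : ∀ t ∈ Ioc 0 T, ∀ ξ : Fin d → ℝ, 0 ≤ ∑ i, ∑ j, a t i j * ξ i * ξ j)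
    (hw : IsWeakSolution p T a 0 0 w) (hw' : InUniquenessClass T a w) {t : ℝ}
    (ht : t ∈ Icc 0 T) : w t = 0 := by
  have hle {φ : (Fin d → ℝ) → ℝ} (hφ : IsTestFunction φ) : ∫ x, w t x * φ x ≤ 0 := by
    simpa [convolution_lsmul] using hw.convolution_nonpos ha hpos hw' (hφ.comp_const_sub 0) ht 0
  refine Lp_eq_of_forall_integral_mul_eq fun φ hφ => ?_
  have hneg : -∫ x, w t x * φ x ≤ 0 := by
    simpa [integral_neg] using hle hφ.neg
  have hzero : ∫ x, (0 : Lp ℝ p (volume : Measure (Fin d → ℝ))) x * φ x = 0 := by simp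
  rw [hzero]
  exact le_antisymm (hle hφ) (neg_nonpos.1 hneg)

end IsWeakSolution

end WeakSolution

lemma integrable_of_integrable_norm_rpow {α E : Type*} [MeasurableSpace α] {μ : Measure α}
    [IsFiniteMeasure μ] [NormedAddCommGroup E] {f : α → E} {p : ℝ} (hp : 1 ≤ p)
    (hf : AEStronglyMeasurable f μ) (hint : Integrable (fun x => ‖f x‖ ^ p) μ) :
    Integrable f μ := by
  have hmem : MemLp f (ENNReal.ofReal p) μ := by
    rw [← integrable_norm_rpow_iff hf (by simpa using one_pos.trans_le hp) ofReal_ne_top,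
      toReal_ofReal (zero_le_one.trans hp)]
    exact hint
  exact hmem.integrable (by simpa using hp)

theorem uniqueness_general {d : ℕ} {p : ℝ≥0∞} [Fact (1 ≤ p)] {T : ℝ}
    {a : ℝ → Fin d → Fin d → ℝ} (ha : ∀ i j, Measurable fun t => a t i j)
    (hpos : ∀ t ∈ Ioc 0 T, ∀ ξ : Fin d → ℝ, 0 ≤ ∑ i, ∑ j, a t i j * ξ i * ξ j)
    {u0 : Lp ℝ p (volume : Measure (Fin d → ℝ))}
    {f u v : ℝ → Lp ℝ p (volume : Measure (Fin d → ℝ))} (hf : IntegrableOn f (Ioc 0 T))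
    (hu : IsWeakSolution p T a u0 f u) (hu' : InUniquenessClass T a u)
    (hv : IsWeakSolution p T a u0 f v) (hv' : InUniquenessClass T a v) :
    ∀ t ∈ Icc 0 T, u t = v t := by
  have hw : IsWeakSolution p T a 0 0 (u - v) := by
    simpa only [sub_self] using hu.sub ha hf hf hv hu' hv'
  exact fun t ht => sub_eq_zero.1 (hw.eq_zero ha hpos (hu'.sub ha hv') ht)

/-- Uniqueness: two continuous-in-`L_p` weak solutions with the same data coincide on `[0,T]`. -/
theorem uniqueness (p T : ℝ) (hp : 1 < p) (hT : 0 < T)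
    [Fact (1 ≤ ENNReal.ofReal p)]
    (d : ℕ) (hd : 0 < d)
    (a : ℝ → Fin d → Fin d → ℝ)
    (ha_meas : ∀ i j, Measurable fun t => a t i j)
    (ha_symm : ∀ t ∈ Ioc (0:ℝ) T, ∀ i j, a t i j = a t j i)
    (ha_pos : ∀ t ∈ Ioc (0:ℝ) T, ∀ ξ : Fin d → ℝ,
      0 ≤ ∑ i, ∑ j, a t i j * ξ i * ξ j)
    (u0 : Lp ℝ (ENNReal.ofReal p) (volume : Measure (Fin d → ℝ)))
    (f u v : ℝ → Lp ℝ (ENNReal.ofReal p) (volume : Measure (Fin d → ℝ)))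
    (hf_meas : AEStronglyMeasurable f (volume.restrict (Ioc (0:ℝ) T)))
    (hf_int : IntegrableOn (fun t => ‖f t‖ ^ p) (Ioc (0:ℝ) T))
    (hu_sol : IsWeakSolution (ENNReal.ofReal p) T a u0 f u)
    (hu_cont : ContinuousOn u (Icc (0:ℝ) T))
    (hu_int : IntegrableOn (fun t => aMax a t * ‖u t‖) (Ioc (0:ℝ) T))
    (hv_sol : IsWeakSolution (ENNReal.ofReal p) T a u0 f v)
    (hv_cont : ContinuousOn v (Icc (0:ℝ) T))
    (hv_int : IntegrableOn (fun t => aMax a t * ‖v t‖) (Ioc (0:ℝ) T)) :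
    ∀ t ∈ Icc (0:ℝ) T, u t = v t := by
  have hf : IntegrableOn f (Ioc 0 T) := integrable_of_integrable_norm_rpow hp.le hf_meas hf_int
  exact uniqueness_general ha_meas ha_pos hf hu_sol ⟨hu_cont, hu_int⟩ hv_sol ⟨hv_cont, hv_int⟩

end
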